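/- Let x_{n−1} ≺ … ≺ x_1 ≺ y_{n−1} ≺ … ≺ y_1 ≺ z_{n−1} ≺ … ≺ z_1 ≺ t_{n−1} ≺ … ≺ t_1 be pairwise distinct points of P ordered anticlockwise on the circle (a quadrilateral configuration with vertices x, y, z, t and enough further points of P to choose right-side n-tuples). For positive integers m, l, p with m + l + p = n, set Θ(m,l,p) = E(x^{m+1}, y^{l−1}, z^{p−1} | y_l, z_p) · E(x^{m−1}, y^{l+1}, z^{p−1} | z_p, x_m) · E(x^{m−1}, y^{l−1}, z^{p+1} | x_m, y_l), and for 1 ≤ i ≤ n−1 set B_i = E(x^i, z^{n−i−1} | t_1, y_1) · E(x^{i−1}, z^{n−i} | y_1, t_1), both in Q_n(P). Then [Θ(m,l,p), B_i] = −1 if (m,l,p) = (i−1, 1, n−i), [Θ(m,l,p), B_i] = 1 if (m,l,p) = (i, 1, n−i−1), and [Θ(m,l,p), B_i] = 0 in all other cases. -/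

import Mathlib

noncomputable section

open scoped Classical
open MvPolynomial

set_option maxHeartbeats 1000000
set_option synthInstance.maxHeartbeats 400000

instance fact01 : Fact ((0:ℝ) < 1) := ⟨one_pos⟩

/-- The circle, modelled as `ℝ/ℤ`. -/
abbrev Circle1 : Type := AddCircle (1:ℝ)

/-- The coordinate in `[0,1)` of the point `x` of the circle obtained after removing the
point `o` and identifying the complement of `o` with an interval. -/
def coordAt (o x : Circle1) : ℝ := ((AddCircle.equivIco 1 0) (x - o) : ℝ)

/-- The sign `△` of a real number, as a rational number in `{-1, 0, 1}`. -/
def sgnQ (a : ℝ) : ℚ := if a < 0 then -1 else if a = 0 then 0 else 1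

/-- The linking number `J(rx, sy)` of the chords `rx` and `sy`, computed using the
cut point `o`. -/
def linkingAt (o r x s y : Circle1) : ℚ :=
  (1/2) * (sgnQ (coordAt o r - coordAt o x) * sgnQ (coordAt o r - coordAt o y)
        * sgnQ (coordAt o y - coordAt o x)
      - sgnQ (coordAt o r - coordAt o x) * sgnQ (coordAt o r - coordAt o s)
        * sgnQ (coordAt o s - coordAt o x))

lemma circle1_infinite : Infinite Circle1 := by
  have h : (Set.Ico (0:ℝ) (0+1)).Infinite := Set.Ico_infinite (by norm_num)
  haveI := h.to_subtype
  exact Infinite.of_injective (fun q : Set.Ico (0:ℝ) (0+1) => (AddCircle.equivIco 1 0).symm q)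
    ((AddCircle.equivIco 1 0).symm.injective)

lemma exists_cut (r x s y : Circle1) :
    ∃ o : Circle1, o ≠ r ∧ o ≠ x ∧ o ≠ s ∧ o ≠ y := by
  haveI : Infinite Circle1 := circle1_infinite
  have hfin : ({r, x, s, y} : Set Circle1).Finite :=
    (((Set.finite_singleton y).insert s).insert x).insert r
  obtain ⟨o, ho⟩ := hfin.infinite_compl.nonempty
  simp only [Set.mem_compl_iff, Set.mem_insert_iff, Set.mem_singleton_iff, not_or] at ho
  exact ⟨o, ho.1, ho.2.1, ho.2.2.1, ho.2.2.2⟩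

/-- The linking number `J(rx, sy)` of the chords `rx` and `sy` (computed with respect to
some cut point distinct from the four points; by the independence of the choice this is
the linking number). -/
def linkQ (r x s y : Circle1) : ℚ := linkingAt (exists_cut r x s y).choose r x s y

/-- The set of points of the circle `l`, listed in anticlockwise (cyclic) order:
there is a cut point `o` avoiding them such that the induced coordinates are
strictly increasing along the list. -/
def AnticlockwiseList (l : List Circle1) : Prop :=
  ∃ o : Circle1, (∀ p ∈ l, p ≠ o) ∧ (l.map (coordAt o)).Chain' (· < ·)

/-- Index type for the generators `xy` of the swapping ring of `P`
(one generator for each ordered pair of distinct points; the generators `xx`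
are identified with `0`). -/
abbrev SwapIdx (P : Set Circle1) : Type := {q : (↥P) × (↥P) // q.1 ≠ q.2}

/-- The swapping ring `Z(P)`: the polynomial ring over `K` on the generators `xy`,
`x ≠ y ∈ P` (this realizes the commutative ring generated by all ordered pairs `xy`
subject to the relations `xx = 0`). -/
abbrev SwapRing (K : Type) [Field K] (P : Set Circle1) : Type := MvPolynomial (SwapIdx P) K

/-- The generator `xy` of the swapping ring (equal to `0` when `x = y`). -/
def gen (K : Type) [Field K] (P : Set Circle1) (x y : ↥P) : SwapRing K P :=
  if h : x ≠ y then MvPolynomial.X (⟨(x, y), h⟩ : SwapIdx P) else 0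

/-- The value of the `(c1,c2)`-swapping bracket on two generators `rx` and `sy`:
`J(rx,sy) • (c1 • ry·sx + c2 • rx·sy)`. -/
def genBr (K : Type) [Field K] (P : Set Circle1) (c1 c2 : K) (g g' : SwapIdx P) :
    SwapRing K P :=
  ((linkQ g.1.1.1 g.1.2.1 g'.1.1.1 g'.1.2.1 : ℚ) : K) •
    (c1 • (gen K P g.1.1 g'.1.2 * gen K P g'.1.1 g.1.2)
      + c2 • (gen K P g.1.1 g.1.2 * gen K P g'.1.1 g'.1.2))

/-- The `(c1,c2)`-swapping bracket on `Z(P)`: the biderivation extending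
`{rx, sy} = J(rx,sy)·(c1·ry·sx + c2·rx·sy)` by the Leibniz rule in each argument.
The swapping bracket is the case `c1 = 1, c2 = 0`. -/
def swapBr (K : Type) [Field K] (P : Set Circle1) (c1 c2 : K) (a b : SwapRing K P) :
    SwapRing K P :=
  (MvPolynomial.mkDerivation K
    (fun g : SwapIdx P => (MvPolynomial.mkDerivation K (genBr K P c1 c2 g)) b)) a

/-- `Δ((x_1,…,x_m),(y_1,…,y_m)) = det (x_i y_j)` in the swapping ring. -/
def Dmat (K : Type) [Field K] (P : Set Circle1) (m : ℕ) (xs ys : Fin m → ↥P) :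
    SwapRing K P :=
  Matrix.det (Matrix.of fun i j => gen K P (xs i) (ys j))

/-- The ideal `R_n(P)` of `Z(P)` generated by all `(n+1)×(n+1)` determinants
`Δ((x_1,…,x_{n+1}),(y_1,…,y_{n+1}))`. -/
def Rideal (K : Type) [Field K] (P : Set Circle1) (n : ℕ) : Ideal (SwapRing K P) :=
  Ideal.span {D : SwapRing K P | ∃ xs ys : Fin (n+1) → ↥P, D = Dmat K P (n+1) xs ys}

/-- The rank `n` swapping ring `Z_n(P) = Z(P)/R_n(P)`. -/
abbrev ZnRing (K : Type) [Field K] (P : Set Circle1) (n : ℕ) : Type :=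
  SwapRing K P ⧸ Rideal K P n

/-- The quotient map `Z(P) → Z_n(P)`. -/
def toZn (K : Type) [Field K] (P : Set Circle1) (n : ℕ) :
    SwapRing K P →+* ZnRing K P n := Ideal.Quotient.mk (Rideal K P n)

/-- The total fraction ring `Q_n(P)` of the rank `n` swapping ring. -/
abbrev QnRing (K : Type) [Field K] (P : Set Circle1) (n : ℕ) : Type :=
  Localization (nonZeroDivisors (ZnRing K P n))

/-- The canonical map `Z(P) → Q_n(P)`. -/
def toQn (K : Type) [Field K] (P : Set Circle1) (n : ℕ) :
    SwapRing K P →+* QnRing K P n :=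
  (algebraMap (ZnRing K P n) (QnRing K P n)).comp (toZn K P n)

/-- `Bq` is the extension to the total fraction ring `Q_n(P)` of the `(c1,c2)`-swapping
bracket of the rank `n` swapping algebra: it agrees with the swapping bracket on the image
of `Z(P)` and satisfies the Leibniz rule in both arguments (these properties determine it
uniquely). -/
def IsQnBracket (K : Type) [Field K] (P : Set Circle1) (n : ℕ) (c1 c2 : K)
    (Bq : QnRing K P n → QnRing K P n → QnRing K P n) : Prop :=
  (∀ a b : SwapRing K P,
      Bq (toQn K P n a) (toQn K P n b) = toQn K P n (swapBr K P c1 c2 a b)) ∧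
  (∀ a b c : QnRing K P n, Bq (a * b) c = a * Bq b c + b * Bq a c) ∧
  (∀ a b c : QnRing K P n, Bq a (b * c) = b * Bq a c + c * Bq a b)

/-- The `n`-tuple `(x_1, …, x_a, y_1, …, y_b, z_1, …, z_{n-a-b})` built from three
families of points (families are indexed from `0`, i.e. `x 0 = x_1`). -/
def rows3 {α : Type*} {n : ℕ} (x y z : ℕ → α) (a b : ℕ) : Fin n → α :=
  fun i => if (i : ℕ) < a then x (i : ℕ)
    else if (i : ℕ) < a + b then y ((i : ℕ) - a)
    else z ((i : ℕ) - (a + b))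

/-- The `n`-tuple `(x_1, …, x_a, y_1, …, y_b, z_1, …, z_{n-1-a-b}, w)` built from three
families of points and a final point `w`. -/
def rows3s {α : Type*} {n : ℕ} (x y z : ℕ → α) (a b : ℕ) (w : α) : Fin n → α :=
  fun i => if (i : ℕ) < a then x (i : ℕ)
    else if (i : ℕ) < a + b then y ((i : ℕ) - a)
    else if (i : ℕ) < n - 1 then z ((i : ℕ) - (a + b))
    else w

/-- The `n`-tuple `(x_1, …, x_{n-1}, t)`. -/
def snocTup {α : Type*} {n : ℕ} (x : ℕ → α) (t : α) : Fin n → α :=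
  fun i => if (i : ℕ) < n - 1 then x (i : ℕ) else t

/-- The list `f_a, f_{a-1}, …, f_1` (descending enumeration). -/
def descPts (f : ℕ → Circle1) (a : ℕ) : List Circle1 := ((List.range a).map f).reverse

/-- The list `f_1, f_2, …, f_a` (ascending enumeration). -/
def ascPts (f : ℕ → Circle1) (a : ℕ) : List Circle1 := (List.range a).map f

/-- The `(n×n)`-determinant quotient `Δ(numR, v)/Δ(denR, v)` as an element of the total
fraction ring `Q_n(P)`. -/
def EQuot (K : Type) [Field K] (P : Set Circle1) (n : ℕ)
    (numR denR v : Fin n → ↥P)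
    (h : toZn K P n (Dmat K P n denR v) ∈ nonZeroDivisors (ZnRing K P n)) :
    QnRing K P n :=
  Localization.mk (toZn K P n (Dmat K P n numR v)) ⟨toZn K P n (Dmat K P n denR v), h⟩


/-- The image `Θ(m,l,p)` under the homomorphism `θ` of the `(m,l,p)`-triple ratio of the
triangle `xyz`:
`E(x^{m+1},y^{l-1},z^{p-1} | y_l, z_p) · E(x^{m-1},y^{l+1},z^{p-1} | z_p, x_m)
  · E(x^{m-1},y^{l-1},z^{p+1} | x_m, y_l)`,
computed with the right-side `n`-tuple `v`.  (Families are indexed from `0`, so `x_m` is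
`x (m-1)`, etc.) -/
def thetaTri (K : Type) [Field K] (P : Set Circle1) (n : ℕ) (x y z : ℕ → ↥P)
    (m l p : ℕ) (v : Fin n → ↥P)
    (h1 : toZn K P n (Dmat K P n (rows3s x y z (m+1) (l-1) (z (p-1))) v)
          ∈ nonZeroDivisors (ZnRing K P n))
    (h2 : toZn K P n (Dmat K P n (rows3s x y z (m-1) (l+1) (x (m-1))) v)
          ∈ nonZeroDivisors (ZnRing K P n))
    (h3 : toZn K P n (Dmat K P n (rows3s x y z (m-1) (l-1) (y (l-1))) v)
          ∈ nonZeroDivisors (ZnRing K P n)) : QnRing K P n :=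
  EQuot K P n (rows3s x y z (m+1) (l-1) (y (l-1))) (rows3s x y z (m+1) (l-1) (z (p-1))) v h1
    * EQuot K P n (rows3s x y z (m-1) (l+1) (z (p-1))) (rows3s x y z (m-1) (l+1) (x (m-1))) v h2
    * EQuot K P n (rows3s x y z (m-1) (l-1) (x (m-1))) (rows3s x y z (m-1) (l-1) (y (l-1))) v h3

/-- The image under the homomorphism `θ` of the `(i, n-i)`-edge function of the edge `xz`
of the quadrilateral `x y z t` (with `t1 = t_1` and `y1 = y_1`):
`E(x^i, z^{n-i-1} | t_1, y_1) · E(x^{i-1}, z^{n-i} | y_1, t_1)`,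
computed with the right-side `n`-tuple `v`. -/
def edgeQuot (K : Type) [Field K] (P : Set Circle1) (n : ℕ) (x z : ℕ → ↥P)
    (t1 y1 : ↥P) (i : ℕ) (v : Fin n → ↥P)
    (h1 : toZn K P n (Dmat K P n (rows3s x z x i (n-i-1) y1) v)
          ∈ nonZeroDivisors (ZnRing K P n))
    (h2 : toZn K P n (Dmat K P n (rows3s x z x (i-1) (n-i) t1) v)
          ∈ nonZeroDivisors (ZnRing K P n)) : QnRing K P n :=
  EQuot K P n (rows3s x z x i (n-i-1) t1) (rows3s x z x i (n-i-1) y1) v h1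
    * EQuot K P n (rows3s x z x (i-1) (n-i) y1) (rows3s x z x (i-1) (n-i) t1) v h2

/-!
Cut the circle open at a point `o`, let `φ(p, q) = ±1` record whether `p` comes before `q`, and
let `δ` be the derivation scaling the generator `pq` by `φ(p, q)`. The linking number is a
combination of such signs, `2 J(rx, sy) = φ(r, s) + φ(x, y) - φ(r, y) - φ(x, s)`, so Jacobi's
formula for the derivative of a determinant gives, for `Δ_a = det A` and `Δ_b = det B` with a
common right side,
`2 {Δ_a, Δ_b} = tr ((Φ ⊙ (A adj B)) (B adj A)) + Δ_a δ(Δ_b) - δ(Δ_a) Δ_b`,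
where `Φ = (φ(a_i, b_k))`. A row `a_i = b_j` makes the entries `(A adj B)_ik` with `k ≠ j` vanish.
Hence, if `φ(a_i, b_k) = e_k` whenever `a_i ∉ b` and `b_k ∉ a`, the trace is `(∑ e_k) Δ_a Δ_b`,
the sum being over `b_k ∉ a`. The `δ`-terms cancel in brackets of quotients of determinants. In
`[·, B_i]` everything but the rows `y_1` and `t_1` cancels, and what remains vanishes unless the
left side is `x^α, z^(n-α)` with `α = i`; such a left side occurs once in the numerator of
`Θ(m,l,p)` when `(m, l) = (i, 1)` and once in its denominator when `(m, l) = (i - 1, 1)`.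
-/

section LinkingNumber

/-- The sign `φ_o(p, q) ∈ {-1, 0, 1}` comparing two points of the circle cut open at `o`: it is `1`
when `p` comes before `q`. -/
def orderSign (o p q : Circle1) : ℤ := SignType.sign (coordAt o q - coordAt o p)

lemma orderSign_self (o p : Circle1) : orderSign o p p = 0 := by simp [orderSign]

lemma orderSign_swap (o p q : Circle1) : orderSign o q p = -orderSign o p q := by
  rw [orderSign, orderSign, ← neg_sub, Left.sign_neg, SignType.coe_neg]

lemma orderSign_of_lt {o p q : Circle1} (h : coordAt o p < coordAt o q) : orderSign o p q = 1 := by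
  rw [orderSign, sign_pos (sub_pos.2 h), SignType.coe_one]

lemma orderSign_of_gt {o p q : Circle1} (h : coordAt o q < coordAt o p) : orderSign o p q = -1 := by
  rw [orderSign_swap, orderSign_of_lt h]

lemma sgnQ_coordAt_sub (o p q : Circle1) :
    sgnQ (coordAt o q - coordAt o p) = orderSign o p q := by
  rcases lt_trichotomy (coordAt o q) (coordAt o p) with h | h | h
  · simp [sgnQ, orderSign_of_gt h, h]
  · simp [sgnQ, orderSign, h]
  · simp [sgnQ, orderSign_of_lt h, h.not_gt, sub_eq_zero, h.ne']

lemma orderSign_mul_mul (o p q r : Circle1) :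
    orderSign o q p * orderSign o r p * orderSign o q r
      = orderSign o p q + orderSign o q r + orderSign o r p := by
  simp only [orderSign, sign_apply]
  split_ifs <;> first | rfl | (exfalso; linarith)

lemma coordAt_mem_Ico (o x : Circle1) : coordAt o x ∈ Set.Ico (0 : ℝ) 1 := by
  simpa [coordAt] using ((AddCircle.equivIco 1 0) (x - o)).2

lemma coe_coordAt (o x : Circle1) : (coordAt o x : Circle1) = x - o :=
  AddCircle.coe_equivIco

lemma coordAt_change_cut (o o' x : Circle1) :
    coordAt o' x = coordAt o x + coordAt o' o ∨ coordAt o' x = coordAt o x + coordAt o' o - 1 := by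
  have hcoe : ((coordAt o' x - coordAt o x - coordAt o' o : ℝ) : Circle1) = 0 := by
    simp only [AddCircle.coe_sub, coe_coordAt]
    abel
  obtain ⟨k, hk⟩ := AddCircle.coe_eq_zero_iff (p := (1 : ℝ)) |>.1 hcoe
  rw [zsmul_eq_mul, mul_one] at hk
  obtain ⟨hx, hx'⟩ := coordAt_mem_Ico o x
  obtain ⟨hy, hy'⟩ := coordAt_mem_Ico o' x
  obtain ⟨hz, hz'⟩ := coordAt_mem_Ico o' o
  have hk_gt : -2 < k := by exact_mod_cast (by linarith : (-2 : ℝ) < k)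
  have hk_lt : k < 1 := by exact_mod_cast (by linarith : (k : ℝ) < 1)
  obtain rfl | rfl : k = 0 ∨ k = -1 := by omega
  · exact .inl (by push_cast at hk; linarith)
  · exact .inr (by push_cast at hk; linarith)

lemma exists_orderSign_change_cut (o o' : Circle1) :
    ∃ c : Circle1 → ℤ, ∀ p q, orderSign o' p q = orderSign o p q + c p - c q := by
  have hc (p : Circle1) : ∃ k : ℤ, k = 0 ∧ coordAt o' p = coordAt o p + coordAt o' o ∨
      k = 2 ∧ coordAt o' p = coordAt o p + coordAt o' o - 1 :=
    (coordAt_change_cut o o' p).elim (fun h => ⟨0, .inl ⟨rfl, h⟩⟩) (fun h => ⟨2, .inr ⟨rfl, h⟩⟩)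
  choose c hc using hc
  refine ⟨c, fun p q => ?_⟩
  obtain ⟨hp, hp'⟩ := coordAt_mem_Ico o p
  obtain ⟨hq, hq'⟩ := coordAt_mem_Ico o q
  obtain ⟨hp₀, hp₁⟩ := coordAt_mem_Ico o' p
  obtain ⟨hq₀, hq₁⟩ := coordAt_mem_Ico o' q
  rcases hc p with ⟨hcp, hp⟩ | ⟨hcp, hp⟩ <;> rcases hc q with ⟨hcq, hq⟩ | ⟨hcq, hq⟩ <;>
    rw [hcp, hcq]
  · simp [orderSign, hp, hq]
  · rw [orderSign_of_gt (o := o') (by linarith), orderSign_of_lt (o := o) (by linarith)]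
    norm_num
  · rw [orderSign_of_lt (o := o') (by linarith), orderSign_of_gt (o := o) (by linarith)]
    norm_num
  · simp [orderSign, hp, hq]

lemma two_mul_linkingAt (o r x s y : Circle1) :
    2 * linkingAt o r x s y
      = ((orderSign o r s + orderSign o x y - orderSign o r y - orderSign o x s : ℤ) : ℚ) := by
  have hry := orderSign_mul_mul o r x y
  have hrs := orderSign_mul_mul o r x s
  rw [orderSign_swap o r y] at hry
  rw [orderSign_swap o r s] at hrs
  have hry' : (_ : ℚ) = _ := congrArg Int.cast hry
  have hrs' : (_ : ℚ) = _ := congrArg Int.cast hrs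
  rw [linkingAt]
  simp only [sgnQ_coordAt_sub, orderSign_swap o r y, orderSign_swap o r s]
  push_cast at hry' hrs' ⊢
  linear_combination hry' - hrs'

/-- Changing the cut point alters `φ` by a coboundary, which cancels in the alternating sum. -/
lemma two_mul_linkQ (o r x s y : Circle1) :
    2 * linkQ r x s y
      = ((orderSign o r s + orderSign o x y - orderSign o r y - orderSign o x s : ℤ) : ℚ) := by
  obtain ⟨c, hc⟩ := exists_orderSign_change_cut o (exists_cut r x s y).choose
  rw [linkQ, two_mul_linkingAt]
  simp only [hc]
  congr 1
  ring

end LinkingNumber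

section Jacobi

variable {R A ι : Type*} [CommRing R] [CommRing A] [Algebra R A] (D : Derivation R A A)

lemma derivation_prod [DecidableEq ι] (s : Finset ι) (f : ι → A) :
    D (∏ i ∈ s, f i) = ∑ i ∈ s, (∏ j ∈ s.erase i, f j) * D (f i) := by
  induction s using Finset.induction_on with
  | empty => simp
  | insert a s ha ih =>
    rw [Finset.prod_insert ha, D.leibniz, ih, Finset.sum_insert ha, Finset.erase_insert ha,
      add_comm, smul_eq_mul, smul_eq_mul, Finset.mul_sum]
    congr 1
    refine Finset.sum_congr rfl fun i hi => ?_
    rw [Finset.erase_insert_of_ne (ne_of_mem_of_not_mem hi ha).symm,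
      Finset.prod_insert fun h => ha (Finset.mem_of_mem_erase h), mul_assoc]

lemma derivation_det_eq_sum_det_updateCol [DecidableEq ι] [Fintype ι] (M : Matrix ι ι A) :
    D M.det = ∑ j, (M.updateCol j fun i => D (M i j)).det := by
  simp only [Matrix.det_apply']
  rw [Finset.sum_comm, map_sum]
  refine Finset.sum_congr rfl fun σ _ => ?_
  rw [D.leibniz, D.map_intCast, smul_zero, add_zero, derivation_prod, smul_eq_mul, Finset.mul_sum]
  refine Finset.sum_congr rfl fun j _ => ?_
  rw [← Finset.mul_prod_erase _ _ (Finset.mem_univ j), Matrix.updateCol_self, mul_comm (D _)]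
  congr 2
  refine Finset.prod_congr rfl fun k hk => ?_
  rw [Matrix.updateCol_ne (Finset.ne_of_mem_erase hk)]

/-- Jacobi's formula. -/
lemma derivation_det [DecidableEq ι] [Fintype ι] (M : Matrix ι ι A) :
    D M.det = (M.adjugate * M.map D).trace := by
  rw [derivation_det_eq_sum_det_updateCol, Matrix.trace]
  refine Finset.sum_congr rfl fun j _ => ?_
  rw [← Matrix.cramer_apply, Matrix.cramer_eq_adjugate_mulVec, Matrix.mulVec, dotProduct,
    Matrix.diag_apply, Matrix.mul_apply]
  rfl

end Jacobi

section SwapBracket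

variable (K : Type) [Field K] (P : Set Circle1)

lemma gen_self (r : ↥P) : gen K P r r = 0 := dif_neg (not_not.2 rfl)

lemma gen_of_ne {r s : ↥P} (h : r ≠ s) : gen K P r s = X (⟨(r, s), h⟩ : SwapIdx P) := dif_pos h

/-- The swapping bracket `{·, b}` as a derivation in its first argument. -/
def swapDerivation (b : SwapRing K P) : Derivation K (SwapRing K P) (SwapRing K P) :=
  mkDerivation K fun g => mkDerivation K (genBr K P 1 0 g) b

lemma swapDerivation_apply (a b : SwapRing K P) :
    swapDerivation K P b a = swapBr K P 1 0 a b := rfl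

lemma swapBr_gen {r x : ↥P} (h : r ≠ x) (b : SwapRing K P) :
    swapBr K P 1 0 (gen K P r x) b = mkDerivation K (genBr K P 1 0 ⟨(r, x), h⟩) b := by
  rw [gen_of_ne K P h, swapBr, mkDerivation_X]

lemma swapBr_gen_self (r : ↥P) (b : SwapRing K P) : swapBr K P 1 0 (gen K P r r) b = 0 := by
  rw [gen_self, ← swapDerivation_apply, map_zero]

/-- The derivation scaling each generator `pq` by the sign `φ_o(p, q)`. -/
def orderDerivation (o : Circle1) : Derivation K (SwapRing K P) (SwapRing K P) :=
  mkDerivation K fun g => (orderSign o g.1.1 g.1.2 : SwapRing K P) * X g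

lemma orderDerivation_gen (o : Circle1) (p q : ↥P) :
    orderDerivation K P o (gen K P p q) = (orderSign o p q : SwapRing K P) * gen K P p q := by
  by_cases h : p = q
  · rw [h, gen_self, map_zero, mul_zero]
  · rw [gen_of_ne K P h, orderDerivation, mkDerivation_X]

lemma two_mul_swapBr_gen_gen [CharZero K] (o : Circle1) (r x s y : ↥P) :
    2 * swapBr K P 1 0 (gen K P r x) (gen K P s y)
      = ((orderSign o r s + orderSign o x y - orderSign o r y - orderSign o x s : ℤ) :
          SwapRing K P) * (gen K P r y * gen K P s x) := by
  by_cases hrx : r = x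
  · subst hrx
    simp [swapBr_gen_self]
  by_cases hsy : s = y
  · subst hsy
    simp [swapBr_gen K P hrx, gen_self]
  have hlink : (2 : K) * (linkQ r x s y : ℚ)
      = ((orderSign o r s + orderSign o x y - orderSign o r y - orderSign o x s : ℤ) : K) := by
    exact_mod_cast congrArg (Rat.cast (K := K)) (two_mul_linkQ o r x s y)
  rw [swapBr_gen K P hrx, gen_of_ne K P hsy, mkDerivation_X, genBr, zero_smul, add_zero, one_smul,
    smul_eq_C_mul, ← mul_assoc, ← map_ofNat C 2, ← C_mul, hlink, map_intCast]

variable {ι : Type*}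

/-- The matrix `(x_i y_j)` of generators, with `Δ(x, y)` as its determinant. -/
def genMatrix (xs ys : ι → ↥P) : Matrix ι ι (SwapRing K P) :=
  Matrix.of fun i j => gen K P (xs i) (ys j)

/-- The matrix of signs `φ_o(x_i, y_j)`. -/
def signMatrix (o : Circle1) (xs ys : ι → ↥P) : Matrix ι ι (SwapRing K P) :=
  Matrix.of fun i j => (orderSign o (xs i) (ys j) : SwapRing K P)

variable [Fintype ι] [DecidableEq ι]

lemma swapBr_gen_det (r x : ↥P) (M : Matrix ι ι (SwapRing K P)) :
    swapBr K P 1 0 (gen K P r x) M.det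
      = (M.adjugate * M.map (swapBr K P 1 0 (gen K P r x))).trace := by
  by_cases h : r = x
  · subst h
    simp [swapBr_gen_self, Matrix.trace, Matrix.mul_apply]
  · rw [swapBr_gen K P h, derivation_det]
    congr 3
    funext b
    exact (swapBr_gen K P h b).symm

open scoped Matrix

lemma genMatrix_mul_adjugate_apply_eq_zero {a b : ι → ↥P} (v : ι → ↥P) {i k k' : ι}
    (hab : a i = b k') (hk : k' ≠ k) :
    (genMatrix K P a v * (genMatrix K P b v).adjugate) i k = 0 := by
  have hrow : (genMatrix K P a v * (genMatrix K P b v).adjugate) i k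
      = (genMatrix K P b v * (genMatrix K P b v).adjugate) k' k := by
    simp only [Matrix.mul_apply, genMatrix, Matrix.of_apply, hab]
  rw [hrow, Matrix.mul_adjugate, Matrix.smul_apply, Matrix.one_apply_ne hk, smul_zero]

lemma signMatrix_entry_mul_eq (o : Circle1) (a b v : ι → ↥P) (e : ι → ℤ)
    (he : ∀ i k, a i ∉ Set.range b → b k ∉ Set.range a → orderSign o (a i) (b k) = e k) (i k : ι) :
    (orderSign o (a i) (b k) : SwapRing K P)
        * ((genMatrix K P a v * (genMatrix K P b v).adjugate) i k
          * (genMatrix K P b v * (genMatrix K P a v).adjugate) k i)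
      = ((if b k ∈ Set.range a then 0 else e k : ℤ) : SwapRing K P)
        * ((genMatrix K P a v * (genMatrix K P b v).adjugate) i k
          * (genMatrix K P b v * (genMatrix K P a v).adjugate) k i) := by
  by_cases hb : b k ∈ Set.range a
  · obtain ⟨i', hi'⟩ := hb
    by_cases hii' : i' = i
    · subst hii'
      rw [if_pos ⟨i', hi'⟩, hi', orderSign_self]
    · rw [genMatrix_mul_adjugate_apply_eq_zero K P v hi'.symm hii', mul_zero, mul_zero, mul_zero]
  · by_cases ha : a i ∈ Set.range b
    · obtain ⟨k', hk'⟩ := ha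
      have hkk' : k' ≠ k := fun h => hb ⟨i, by rw [← hk', h]⟩
      rw [genMatrix_mul_adjugate_apply_eq_zero K P v hk'.symm hkk', zero_mul, mul_zero, mul_zero]
    · rw [if_neg hb, he i k ha hb]

lemma trace_signMatrix_hadamard_mul (o : Circle1) (a b v : ι → ↥P) (e : ι → ℤ)
    (he : ∀ i k, a i ∉ Set.range b → b k ∉ Set.range a → orderSign o (a i) (b k) = e k) :
    ((signMatrix K P o a b ⊙ (genMatrix K P a v * (genMatrix K P b v).adjugate))
        * (genMatrix K P b v * (genMatrix K P a v).adjugate)).trace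
      = ((∑ k, if b k ∈ Set.range a then 0 else e k : ℤ) : SwapRing K P)
        * ((genMatrix K P a v).det * (genMatrix K P b v).det) := by
  have hdiag (k : ι) : (genMatrix K P b v * (genMatrix K P a v).adjugate
      * (genMatrix K P a v * (genMatrix K P b v).adjugate)) k k
      = (genMatrix K P a v).det * (genMatrix K P b v).det := by
    rw [Matrix.mul_assoc, ← Matrix.mul_assoc (genMatrix K P a v).adjugate, Matrix.adjugate_mul,
      Matrix.smul_mul, Matrix.one_mul, Matrix.mul_smul, Matrix.mul_adjugate]
    simp
  rw [Matrix.trace, Int.cast_sum, Finset.sum_mul]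
  simp only [Matrix.diag_apply, Matrix.mul_apply (M := _ ⊙ _), Matrix.hadamard_apply, mul_assoc,
    signMatrix, Matrix.of_apply]
  rw [Finset.sum_comm]
  refine Finset.sum_congr rfl fun k _ => ?_
  rw [Finset.sum_congr rfl fun i _ => signMatrix_entry_mul_eq K P o a b v e he i k,
    ← Finset.mul_sum, ← hdiag k, Matrix.mul_apply (M := _ * _)]
  simp only [mul_comm]

/-- `2{f, g} = c f g + f · δ(g) - δ(f) · g` for `δ = orderDerivation K P o`. On determinants with a
common right side `c` plays the role of `2[f, g]`, up to the terms in `δ`, which cancel for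
quotients of determinants. -/
def HasSwapExponent (o : Circle1) (f g : SwapRing K P) (c : ℤ) : Prop :=
  2 * swapBr K P 1 0 f g
    = c * (f * g) + f * orderDerivation K P o g - orderDerivation K P o f * g

variable [CharZero K]

lemma two_mul_swapBr_gen_det (o : Circle1) (r : ↥P) (b v : ι → ↥P) (j : ι) :
    2 * swapBr K P 1 0 (gen K P r (v j)) (genMatrix K P b v).det
      = ∑ k, (orderSign o r (b k) + orderSign o (b k) (v j))
            * (∑ l, gen K P r (v l) * (genMatrix K P b v).adjugate l k) * gen K P (b k) (v j)
        - orderSign o r (v j) * gen K P r (v j) * (genMatrix K P b v).det := by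
  set B := genMatrix K P b v
  have hentry (k l : ι) : 2 * swapBr K P 1 0 (gen K P r (v j)) (B k l)
      = (orderSign o r (b k) + orderSign o (b k) (v j)
          + (orderSign o (v j) (v l) - orderSign o r (v l))) * (gen K P r (v l) * B k j) := by
    have h := two_mul_swapBr_gen_gen K P o r (v j) (b k) (v l)
    rw [orderSign_swap o (b k) (v j)] at h
    push_cast at h
    exact h.trans (by simp only [B, genMatrix, Matrix.of_apply]; ring)
  have hdiag : ∑ l, (orderSign o (v j) (v l) - orderSign o r (v l)) * gen K P r (v l)
        * (B.adjugate * B) l j = -(orderSign o r (v j) * gen K P r (v j) * B.det) := by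
    rw [Finset.sum_eq_single j (fun l _ hl => by simp [Matrix.adjugate_mul, hl]) (by simp),
      orderSign_self, Matrix.adjugate_mul, Matrix.smul_apply, Matrix.one_apply_eq, smul_eq_mul]
    push_cast
    ring
  rw [sub_eq_add_neg, ← hdiag, swapBr_gen_det]
  simp only [Matrix.trace, Matrix.diag_apply, Matrix.mul_apply, Finset.mul_sum, Finset.sum_mul,
    Matrix.map_apply]
  rw [Finset.sum_comm, Finset.sum_comm (s := Finset.univ (α := ι)) (t := Finset.univ (α := ι))
    (f := fun l k => _ * (B.adjugate l k * B k j)), ← Finset.sum_add_distrib]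
  refine Finset.sum_congr rfl fun k _ => ?_
  rw [← Finset.sum_add_distrib]
  refine Finset.sum_congr rfl fun l _ => ?_
  have hBkj : gen K P (b k) (v j) = B k j := rfl
  rw [hBkj]
  linear_combination B.adjugate l k * hentry k l

lemma two_smul_map_swapDerivation_det (o : Circle1) (a b v : ι → ↥P) :
    (2 : SwapRing K P) • (genMatrix K P a v).map (swapDerivation K P (genMatrix K P b v).det)
      = (signMatrix K P o a b ⊙ (genMatrix K P a v * (genMatrix K P b v).adjugate))
            * genMatrix K P b v
          + genMatrix K P a v * (genMatrix K P b v).adjugate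
            * (genMatrix K P b v).map (orderDerivation K P o)
          - (genMatrix K P b v).det • (genMatrix K P a v).map (orderDerivation K P o) := by
  ext1 i j
  have h := two_mul_swapBr_gen_det K P o (a i) b v j
  simp only [Matrix.smul_apply, Matrix.sub_apply, Matrix.add_apply, Matrix.map_apply,
    Matrix.mul_apply (M := _ ⊙ _), Matrix.mul_apply (M := _ * _), Matrix.hadamard_apply,
    smul_eq_mul, ← Finset.sum_add_distrib]
  simp only [Matrix.mul_apply]
  refine h.trans (congrArg₂ _ (Finset.sum_congr rfl fun k _ => ?_) ?_)
  · simp only [genMatrix, signMatrix, Matrix.of_apply, orderDerivation_gen]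
    ring
  · simp only [genMatrix, Matrix.of_apply, orderDerivation_gen]
    ring

lemma two_mul_swapBr_det_det (o : Circle1) (a b v : ι → ↥P) :
    2 * swapBr K P 1 0 (genMatrix K P a v).det (genMatrix K P b v).det
      = ((signMatrix K P o a b ⊙ (genMatrix K P a v * (genMatrix K P b v).adjugate))
            * (genMatrix K P b v * (genMatrix K P a v).adjugate)).trace
          + (genMatrix K P a v).det * orderDerivation K P o (genMatrix K P b v).det
          - orderDerivation K P o (genMatrix K P a v).det * (genMatrix K P b v).det := by
  have h := two_smul_map_swapDerivation_det K P o a b v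
  simp only [derivation_det (orderDerivation K P o)]
  rw [← swapDerivation_apply, derivation_det]
  generalize (genMatrix K P a v).map (orderDerivation K P o) = dA at h ⊢
  generalize (genMatrix K P b v).map (orderDerivation K P o) = dB at h ⊢
  set A := genMatrix K P a v
  set B := genMatrix K P b v
  have hswap : (A.adjugate * (A * B.adjugate * dB)).trace = A.det * (B.adjugate * dB).trace := by
    rw [Matrix.mul_assoc A, ← Matrix.mul_assoc, Matrix.adjugate_mul, Matrix.smul_mul,
      Matrix.one_mul, Matrix.trace_smul, smul_eq_mul]
  calc _ = (A.adjugate * ((2 : SwapRing K P) • A.map (swapDerivation K P B.det))).trace := by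
        rw [Matrix.mul_smul, Matrix.trace_smul, smul_eq_mul]
    _ = _ := by
        rw [h, Matrix.mul_sub, Matrix.mul_add, Matrix.trace_sub, Matrix.trace_add, hswap,
          Matrix.mul_smul, Matrix.trace_smul, smul_eq_mul, mul_comm B.det, ← Matrix.mul_assoc,
          Matrix.trace_mul_cycle, Matrix.trace_mul_comm]

lemma hasSwapExponent_Dmat (o : Circle1) {n : ℕ} (a b v : Fin n → ↥P) (e : Fin n → ℤ)
    (he : ∀ i k, a i ∉ Set.range b → b k ∉ Set.range a → orderSign o (a i) (b k) = e k) :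
    HasSwapExponent K P o (Dmat K P n a v) (Dmat K P n b v)
      (∑ k, if b k ∈ Set.range a then 0 else e k) := by
  have h := two_mul_swapBr_det_det K P o a b v
  rwa [trace_signMatrix_hadamard_mul K P o a b v e he] at h

lemma hasSwapExponent_Dmat_snoc (o : Circle1) {N : ℕ} (a v : Fin (N + 1) → ↥P) (b : Fin N → ↥P)
    (w : ↥P) (e : Fin N → ℤ) (s : ℤ)
    (he : ∀ i k, a i ∉ Set.range b → b k ∉ Set.range a → orderSign o (a i) (b k) = e k)
    (hs : ∀ i, a i ∉ Set.range b → w ∉ Set.range a → orderSign o (a i) w = s) :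
    HasSwapExponent K P o (Dmat K P (N + 1) a v) (Dmat K P (N + 1) (Fin.snoc b w) v)
      ((∑ k, if b k ∈ Set.range a then 0 else e k) + if w ∈ Set.range a then 0 else s) := by
  have h := hasSwapExponent_Dmat K P o a (Fin.snoc b w) v (Fin.snoc e s) fun i k hi hk => ?_
  · simpa only [Fin.sum_univ_castSucc, Fin.snoc_castSucc, Fin.snoc_last] using h
  · have hi' : a i ∉ Set.range b := by
      rintro ⟨j, hj⟩
      exact hi ⟨j.castSucc, by rw [Fin.snoc_castSucc, hj]⟩
    induction k using Fin.lastCases with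
    | last => simpa only [Fin.snoc_last] using hs i hi' (by simpa only [Fin.snoc_last] using hk)
    | cast k =>
      simpa only [Fin.snoc_castSucc] using he i k hi' (by simpa only [Fin.snoc_castSucc] using hk)

end SwapBracket

section LogBracket

variable {R : Type*} [CommRing R] {br : R → R → R}

/-- `2[a, b] = c` for the normalized bracket `[a, b] = {a, b} / (a b)`, with the denominator
cleared so that `a` and `b` need not be invertible. -/
def HasLogBracket (br : R → R → R) (a b : R) (c : ℤ) : Prop := 2 * br a b = c * (a * b)

lemma HasLogBracket.mul_left (hbr : ∀ a b c, br (a * b) c = a * br b c + b * br a c)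
    {a a' b : R} {c c' : ℤ} (h : HasLogBracket br a b c) (h' : HasLogBracket br a' b c') :
    HasLogBracket br (a * a') b (c + c') := by
  rw [HasLogBracket] at *
  rw [hbr, Int.cast_add]
  linear_combination a' * h + a * h'

lemma HasLogBracket.mul_right (hbr : ∀ a b c, br a (b * c) = b * br a c + c * br a b)
    {a b b' : R} {c c' : ℤ} (h : HasLogBracket br a b c) (h' : HasLogBracket br a b' c') :
    HasLogBracket br a (b * b') (c + c') := by
  rw [HasLogBracket] at *
  rw [hbr, Int.cast_add]
  linear_combination b' * h + b * h'

lemma HasLogBracket.eq_mul (h2 : IsUnit (2 : R)) {a b : R} {c : ℤ}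
    (h : HasLogBracket br a b (2 * c)) : br a b = c * (a * b) :=
  h2.mul_left_cancel <| by rw [h]; push_cast; ring

end LogBracket

section FractionRing

variable (K : Type) [Field K] (P : Set Circle1) {n : ℕ}

lemma isUnit_two_QnRing [CharZero K] : IsUnit (2 : QnRing K P n) := by
  have h : IsUnit (2 : K) := (two_ne_zero (α := K)).isUnit
  simpa only [map_ofNat] using (h.map C).map (toQn K P n)

lemma isUnit_toQn {f : SwapRing K P} (h : toZn K P n f ∈ nonZeroDivisors (ZnRing K P n)) :
    IsUnit (toQn K P n f) :=
  IsLocalization.map_units (QnRing K P n) ⟨toZn K P n f, h⟩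

lemma EQuot_mul_toQn (a b v : Fin n → ↥P)
    (h : toZn K P n (Dmat K P n b v) ∈ nonZeroDivisors (ZnRing K P n)) :
    EQuot K P n a b v h * toQn K P n (Dmat K P n b v) = toQn K P n (Dmat K P n a v) := by
  rw [EQuot, Localization.mk_eq_mk']
  exact IsLocalization.mk'_spec (QnRing K P n) (toZn K P n (Dmat K P n a v))
    ⟨toZn K P n (Dmat K P n b v), h⟩

variable {K P} in
lemma hasLogBracket_EQuot {Bq : QnRing K P n → QnRing K P n → QnRing K P n}
    (hBq : IsQnBracket K P n 1 0 Bq) {o : Circle1} {a a' b b' v : Fin n → ↥P}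
    (ha' : toZn K P n (Dmat K P n a' v) ∈ nonZeroDivisors (ZnRing K P n))
    (hb' : toZn K P n (Dmat K P n b' v) ∈ nonZeroDivisors (ZnRing K P n))
    {c₁ c₂ c₃ c₄ : ℤ}
    (h₁ : HasSwapExponent K P o (Dmat K P n a v) (Dmat K P n b v) c₁)
    (h₂ : HasSwapExponent K P o (Dmat K P n a v) (Dmat K P n b' v) c₂)
    (h₃ : HasSwapExponent K P o (Dmat K P n a' v) (Dmat K P n b v) c₃)
    (h₄ : HasSwapExponent K P o (Dmat K P n a' v) (Dmat K P n b' v) c₄) :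
    HasLogBracket Bq (EQuot K P n a a' v ha') (EQuot K P n b b' v hb')
      (c₁ - c₂ - (c₃ - c₄)) := by
  obtain ⟨hext, hleft, hright⟩ := hBq
  have hmap {f g : SwapRing K P} {c : ℤ} (h : HasSwapExponent K P o f g c) :
      2 * Bq (toQn K P n f) (toQn K P n g)
        = c * (toQn K P n f * toQn K P n g)
          + toQn K P n f * toQn K P n (orderDerivation K P o g)
          - toQn K P n (orderDerivation K P o f) * toQn K P n g := by
    simpa only [map_mul, map_add, map_sub, map_intCast, map_ofNat, ← hext]
      using congrArg (toQn K P n) h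
  have hE := EQuot_mul_toQn K P a a' v ha'
  have hF := EQuot_mul_toQn K P b b' v hb'
  have h₁ := hmap h₁
  have h₂ := hmap h₂
  have h₃ := hmap h₃
  have h₄ := hmap h₄
  rw [← hE, ← hF, hleft, hright, hright] at h₁
  rw [← hE, hleft] at h₂
  rw [← hF, hright] at h₃
  set E := EQuot K P n a a' v ha'
  set F := EQuot K P n b b' v hb'
  apply (isUnit_toQn K P ha').mul_left_cancel
  apply (isUnit_toQn K P hb').mul_left_cancel
  push_cast
  linear_combination h₁ - F * h₂ - E * h₃ + E * F * h₄

end FractionRing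

section TriangleTuple

variable {X : Type*} (x y z : ℕ → X) {n : ℕ}

lemma range_rows3 {a b c : ℕ} (h : a + b + c = n) :
    Set.range (rows3 x y z a b : Fin n → X)
      = x '' Set.Iio a ∪ y '' Set.Iio b ∪ z '' Set.Iio c := by
  apply Set.Subset.antisymm
  · rintro _ ⟨k, rfl⟩
    unfold rows3
    split_ifs with hx hy
    · exact .inl (.inl ⟨_, hx, rfl⟩)
    · exact .inl (.inr ⟨_, Set.mem_Iio.2 (by omega), rfl⟩)
    · exact .inr ⟨_, Set.mem_Iio.2 (by omega), rfl⟩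
  · rintro _ ((⟨j, hj, rfl⟩ | ⟨j, hj, rfl⟩) | ⟨j, hj, rfl⟩) <;> rw [Set.mem_Iio] at hj
    · exact ⟨⟨j, by omega⟩, by simp [rows3, hj]⟩
    · exact ⟨⟨a + j, by omega⟩, by simp [rows3, hj]⟩
    · exact ⟨⟨a + b + j, by omega⟩, by simp [rows3, show ¬a + b + j < a by omega]⟩

lemma rows3s_eq_snoc_rows3 {a b : ℕ} (h : a + b ≤ n) (w : X) :
    (rows3s x y z a b w : Fin (n + 1) → X) = Fin.snoc (rows3 x y z a b) w := by
  ext k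
  induction k using Fin.lastCases with
  | last => simp [rows3s, show ¬n < a by omega, show ¬n < a + b by omega]
  | cast k => simp [rows3s, rows3]

lemma range_rows3s {a b c : ℕ} (h : a + b + c + 1 = n) (w : X) :
    Set.range (rows3s x y z a b w : Fin n → X)
      = insert w (x '' Set.Iio a ∪ y '' Set.Iio b ∪ z '' Set.Iio c) := by
  subst h
  rw [rows3s_eq_snoc_rows3 x y z (by omega), Fin.range_snoc, range_rows3 x y z rfl]

/-- The tuple `a` lists, in some order, the points `x_1, …, x_α, y_1, …, y_β, z_1, …, z_γ`, not all
of them from a single family. These are the left sides of the determinants in a triple ratio. -/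
structure IsTriangleTuple (a : Fin n → X) (α β γ : ℕ) : Prop where
  x_lt : α < n
  y_lt : β < n
  z_lt : γ < n
  add_eq : α + β + γ = n
  range_eq : Set.range a = x '' Set.Iio α ∪ y '' Set.Iio β ∪ z '' Set.Iio γ

variable {α β γ : ℕ}

lemma image_Iio_sub_one (hα : 0 < α) :
    x '' Set.Iio α = insert (x (α - 1)) (x '' Set.Iio (α - 1)) := by
  obtain ⟨k, rfl⟩ : ∃ k, α = k + 1 := ⟨α - 1, by omega⟩
  rw [← Set.image_insert_eq, ← Order.Iio_succ_eq_insert, Nat.succ_eq_succ, Nat.add_sub_cancel]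

lemma isTriangleTuple_rows3s_x (hα : 0 < α) (hα' : α < n) (hβ : β < n) (hγ : γ < n)
    (h : α + β + γ = n) :
    IsTriangleTuple x y z (rows3s x y z (α - 1) β (x (α - 1)) : Fin n → X) α β γ where
  x_lt := hα'
  y_lt := hβ
  z_lt := hγ
  add_eq := h
  range_eq := by
    rw [range_rows3s x y z (c := γ) (by omega), image_Iio_sub_one x hα]
    simp only [Set.insert_union]

lemma isTriangleTuple_rows3s_y (hβ : 0 < β) (hα : α < n) (hβ' : β < n) (hγ : γ < n)
    (h : α + β + γ = n) :
    IsTriangleTuple x y z (rows3s x y z α (β - 1) (y (β - 1)) : Fin n → X) α β γ where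
  x_lt := hα
  y_lt := hβ'
  z_lt := hγ
  add_eq := h
  range_eq := by
    rw [range_rows3s x y z (c := γ) (by omega), image_Iio_sub_one y hβ]
    simp only [Set.insert_union, Set.union_insert]

lemma isTriangleTuple_rows3s_z (hγ : 0 < γ) (hα : α < n) (hβ : β < n) (hγ' : γ < n)
    (h : α + β + γ = n) :
    IsTriangleTuple x y z (rows3s x y z α β (z (γ - 1)) : Fin n → X) α β γ where
  x_lt := hα
  y_lt := hβ
  z_lt := hγ'
  add_eq := h
  range_eq := by
    rw [range_rows3s x y z (c := γ - 1) (by omega), image_Iio_sub_one z hγ, Set.union_insert]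

variable {x y z} {a : Fin n → X}

lemma IsTriangleTuple.exists_eq (ha : IsTriangleTuple x y z a α β γ) (r : Fin n) :
    (∃ j < α, a r = x j) ∨ (∃ j < β, a r = y j) ∨ ∃ j < γ, a r = z j := by
  have hr : a r ∈ Set.range a := ⟨r, rfl⟩
  rw [ha.range_eq] at hr
  rcases hr with (⟨j, hj, h⟩ | ⟨j, hj, h⟩) | ⟨j, hj, h⟩
  · exact .inl ⟨j, hj, h.symm⟩
  · exact .inr (.inl ⟨j, hj, h.symm⟩)
  · exact .inr (.inr ⟨j, hj, h.symm⟩)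

lemma IsTriangleTuple.le_of_x_notMem (ha : IsTriangleTuple x y z a α β γ) {j : ℕ}
    (h : x j ∉ Set.range a) : α ≤ j := by
  contrapose! h
  exact ha.range_eq ▸ .inl (.inl ⟨j, h, rfl⟩)

lemma IsTriangleTuple.le_of_y_notMem (ha : IsTriangleTuple x y z a α β γ) {j : ℕ}
    (h : y j ∉ Set.range a) : β ≤ j := by
  contrapose! h
  exact ha.range_eq ▸ .inl (.inr ⟨j, h, rfl⟩)

lemma IsTriangleTuple.le_of_z_notMem (ha : IsTriangleTuple x y z a α β γ) {j : ℕ}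
    (h : z j ∉ Set.range a) : γ ≤ j := by
  contrapose! h
  exact ha.range_eq ▸ .inr ⟨j, h, rfl⟩

end TriangleTuple

section Quadrilateral

variable {P : Set Circle1} {x y z t : ℕ → ↥P} {o : Circle1} {N : ℕ}

/-- The first `N` points of `f` precede those of `g` on the circle cut open at `o`. -/
def Precedes (o : Circle1) (N : ℕ) (f g : ℕ → ↥P) : Prop :=
  ∀ j < N, ∀ k < N, coordAt o (f j) < coordAt o (g k)

lemma Precedes.ne {f g : ℕ → ↥P} (h : Precedes o N f g) {j k : ℕ} (hj : j < N) (hk : k < N) :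
    f j ≠ g k := fun hjk => (h j hj k hk).ne (by rw [hjk])

/-- The four families of `N` points follow each other in the order `x`, `y`, `z`, `t` on the circle
cut open at `o`; no order is imposed inside a family. -/
structure IsOrderedQuadrilateral (o : Circle1) (N : ℕ) (x y z t : ℕ → ↥P) : Prop where
  x_y : Precedes o N x y
  x_z : Precedes o N x z
  x_t : Precedes o N x t
  y_z : Precedes o N y z
  y_t : Precedes o N y t
  z_t : Precedes o N z t

lemma exists_isOrderedQuadrilateral
    (h : AnticlockwiseList (descPts (fun j => (x j : Circle1)) N
      ++ descPts (fun j => (y j : Circle1)) N ++ descPts (fun j => (z j : Circle1)) N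
      ++ descPts (fun j => (t j : Circle1)) N)) :
    ∃ o, IsOrderedQuadrilateral o N x y z t := by
  obtain ⟨o, -, hchain⟩ := h
  have hmem {f : ℕ → ↥P} {j : ℕ} (hj : j < N) :
      (f j : Circle1) ∈ descPts (fun j => (f j : Circle1)) N := by
    simp only [descPts, List.mem_reverse, List.mem_map, List.mem_range]
    exact ⟨j, hj, rfl⟩
  have hpair := List.pairwise_map.1 (List.isChain_iff_pairwise.1 hchain)
  simp only [List.pairwise_append, List.mem_append] at hpair
  obtain ⟨⟨⟨-, -, hy⟩, -, hz⟩, -, ht⟩ := hpair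
  exact ⟨o,
    { x_y := fun j hj k hk => hy _ (hmem hj) _ (hmem hk)
      x_z := fun j hj k hk => hz _ (.inl (hmem hj)) _ (hmem hk)
      x_t := fun j hj k hk => ht _ (.inl (.inl (hmem hj))) _ (hmem hk)
      y_z := fun j hj k hk => hz _ (.inr (hmem hj)) _ (hmem hk)
      y_t := fun j hj k hk => ht _ (.inl (.inr (hmem hj))) _ (hmem hk)
      z_t := fun j hj k hk => ht _ (.inr (hmem hj)) _ (hmem hk) }⟩

variable {a : Fin (N + 1) → ↥P} {α β γ i q : ℕ}

lemma IsOrderedQuadrilateral.orderSign_rows3 (hQ : IsOrderedQuadrilateral o N x y z t)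
    (ha : IsTriangleTuple x y z a α β γ) (hiq : i + q = N) (r : Fin (N + 1)) (k : Fin N)
    (hr : a r ∉ Set.range (rows3 x z x i q : Fin N → ↥P))
    (hk : rows3 x z x i q k ∉ Set.range a) :
    orderSign o (a r) (rows3 x z x i q k : ↥P) = if (k : ℕ) < i then -1 else 1 := by
  have ⟨hα, hβ, hγ, _, _⟩ := ha
  rw [range_rows3 x z x (c := 0) hiq] at hr
  have hkN := k.2
  by_cases hki : (k : ℕ) < i
  · have hrow : rows3 x z x i q k = x k := if_pos hki
    rw [hrow] at hk ⊢
    have hαk := ha.le_of_x_notMem hk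
    rw [if_pos hki]
    apply orderSign_of_gt
    rcases ha.exists_eq r with ⟨j, hj, h⟩ | ⟨j, hj, h⟩ | ⟨j, hj, h⟩
    · exact absurd (.inl (.inl ⟨j, Set.mem_Iio.2 (by omega), h.symm⟩)) hr
    · exact h ▸ hQ.x_y _ hkN _ (by omega)
    · exact h ▸ hQ.x_z _ hkN _ (by omega)
  · have hrow : rows3 x z x i q k = z (k - i) := by
      rw [rows3, if_neg hki, if_pos (by omega)]
    rw [hrow] at hk ⊢
    have hγk := ha.le_of_z_notMem hk
    rw [if_neg hki]
    apply orderSign_of_lt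
    rcases ha.exists_eq r with ⟨j, hj, h⟩ | ⟨j, hj, h⟩ | ⟨j, hj, h⟩
    · exact h ▸ hQ.x_z _ (by omega) _ (by omega)
    · exact h ▸ hQ.y_z _ (by omega) _ (by omega)
    · exact absurd (.inl (.inr ⟨j, Set.mem_Iio.2 (by omega), h.symm⟩)) hr

lemma IsOrderedQuadrilateral.orderSign_t (hQ : IsOrderedQuadrilateral o N x y z t)
    (ha : IsTriangleTuple x y z a α β γ) (r : Fin (N + 1)) {k : ℕ} (hk : k < N) :
    orderSign o (a r) (t k) = 1 := by
  have ⟨hα, hβ, hγ, _, _⟩ := ha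
  apply orderSign_of_lt
  rcases ha.exists_eq r with ⟨j, hj, h⟩ | ⟨j, hj, h⟩ | ⟨j, hj, h⟩
  · exact h ▸ hQ.x_t _ (by omega) _ hk
  · exact h ▸ hQ.y_t _ (by omega) _ hk
  · exact h ▸ hQ.z_t _ (by omega) _ hk

lemma IsOrderedQuadrilateral.t_notMem_range (hQ : IsOrderedQuadrilateral o N x y z t)
    (ha : IsTriangleTuple x y z a α β γ) {k : ℕ} (hk : k < N) : t k ∉ Set.range a := by
  rintro ⟨r, hr⟩
  have h := hQ.orderSign_t ha r hk
  rw [hr, orderSign_self] at h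
  exact zero_ne_one h

lemma IsOrderedQuadrilateral.y_zero_mem_range_iff (hQ : IsOrderedQuadrilateral o N x y z t)
    (ha : IsTriangleTuple x y z a α β γ) : y 0 ∈ Set.range a ↔ 0 < β := by
  have ⟨hα, hβ, hγ, hsum, hrange⟩ := ha
  refine ⟨?_, fun h => hrange ▸ .inl (.inr ⟨0, h, rfl⟩)⟩
  rintro ⟨r, hr⟩
  rcases ha.exists_eq r with ⟨j, hj, h⟩ | ⟨j, hj, -⟩ | ⟨j, hj, h⟩
  · exact absurd (h.symm.trans hr) (hQ.x_y.ne (by omega) (by omega))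
  · omega
  · exact absurd (hr.symm.trans h) (hQ.y_z.ne (by omega) (by omega))

/-- The contribution of the row `y_1` of the determinant of `x_1, …, x_i, z_1, …, z_{n-1-i}, y_1` to
its bracket with the determinant of a triangle tuple of type `(α, β, n - α - β)`. The row `t_1` in
place of `y_1` would contribute `1`. -/
def apexSign (i α β : ℕ) : ℤ := if 0 < β then 0 else if i < α then 1 else -1

lemma IsOrderedQuadrilateral.orderSign_y_zero (hQ : IsOrderedQuadrilateral o N x y z t)
    (ha : IsTriangleTuple x y z a α β γ) (hiq : i + q = N) (r : Fin (N + 1))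
    (hr : a r ∉ Set.range (rows3 x z x i q : Fin N → ↥P)) (hy : y 0 ∉ Set.range a) :
    orderSign o (a r) (y 0) = apexSign i α β := by
  have hβ : β ≤ 0 := ha.le_of_y_notMem hy
  have ⟨hα, _, hγ, hsum, _⟩ := ha
  rw [range_rows3 x z x (c := 0) hiq] at hr
  rw [apexSign, if_neg hβ.not_gt]
  rcases ha.exists_eq r with ⟨j, hj, h⟩ | ⟨j, hj, -⟩ | ⟨j, hj, h⟩
  · have hij : i ≤ j := by
      contrapose! hr
      exact .inl (.inl ⟨j, hr, h.symm⟩)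
    rw [if_pos (by omega), h, orderSign_of_lt (hQ.x_y _ (by omega) _ (by omega))]
  · omega
  · have hqj : q ≤ j := by
      contrapose! hr
      exact .inl (.inr ⟨j, hr, h.symm⟩)
    rw [if_neg (by omega), h, orderSign_of_gt (hQ.y_z _ (by omega) _ (by omega))]

end Quadrilateral

section EdgeFunction

variable {K : Type} [Field K] [CharZero K] {P : Set Circle1} {x y z t : ℕ → ↥P} {o : Circle1}
  {N : ℕ} {a a' : Fin (N + 1) → ↥P} {α β γ α' β' γ' i q : ℕ}
  {Bq : QnRing K P (N + 1) → QnRing K P (N + 1) → QnRing K P (N + 1)}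

variable (K) in
lemma IsOrderedQuadrilateral.exists_hasSwapExponent_t_y
    (hQ : IsOrderedQuadrilateral o N x y z t) (ha : IsTriangleTuple x y z a α β γ)
    (hiq : i + q = N) (v : Fin (N + 1) → ↥P) :
    ∃ c : ℤ,
      HasSwapExponent K P o (Dmat K P (N + 1) a v)
        (Dmat K P (N + 1) (rows3s x z x i q (t 0)) v) (c + 1) ∧
      HasSwapExponent K P o (Dmat K P (N + 1) a v)
        (Dmat K P (N + 1) (rows3s x z x i q (y 0)) v) (c + apexSign i α β) := by
  have ⟨_, _, _, _, _⟩ := ha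
  have hsnoc (w : ↥P) (s : ℤ) := hasSwapExponent_Dmat_snoc K P o a v (rows3 x z x i q) w _ s
    (hQ.orderSign_rows3 ha hiq)
  have ht := hsnoc (t 0) 1 fun r _ _ => hQ.orderSign_t ha r (by omega)
  have hy := hsnoc (y 0) (apexSign i α β) (hQ.orderSign_y_zero ha hiq)
  rw [if_neg (hQ.t_notMem_range ha (by omega))] at ht
  have hif : (if y 0 ∈ Set.range a then 0 else apexSign i α β) = apexSign i α β := by
    simp only [hQ.y_zero_mem_range_iff ha, apexSign]
    split_ifs <;> rfl
  rw [hif] at hy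
  simp only [rows3s_eq_snoc_rows3 x z x hiq.le]
  exact ⟨_, ht, hy⟩

variable {v : Fin (N + 1) → ↥P}
  {ha' : toZn K P (N + 1) (Dmat K P (N + 1) a' v) ∈ nonZeroDivisors (ZnRing K P (N + 1))}

lemma IsOrderedQuadrilateral.hasLogBracket_EQuot_t_y (hQ : IsOrderedQuadrilateral o N x y z t)
    (hBq : IsQnBracket K P (N + 1) 1 0 Bq) (ht : IsTriangleTuple x y z a α β γ)
    (ht' : IsTriangleTuple x y z a' α' β' γ') (hiq : i + q = N)
    (hb : toZn K P (N + 1) (Dmat K P (N + 1) (rows3s x z x i q (y 0)) v)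
      ∈ nonZeroDivisors (ZnRing K P (N + 1))) :
    HasLogBracket Bq (EQuot K P (N + 1) a a' v ha')
      (EQuot K P (N + 1) (rows3s x z x i q (t 0)) (rows3s x z x i q (y 0)) v hb)
      (apexSign i α' β' - apexSign i α β) := by
  obtain ⟨c, hct, hcy⟩ := hQ.exists_hasSwapExponent_t_y K ht hiq v
  obtain ⟨c', hct', hcy'⟩ := hQ.exists_hasSwapExponent_t_y K ht' hiq v
  convert hasLogBracket_EQuot hBq ha' hb hct hcy hct' hcy' using 1
  ring

lemma IsOrderedQuadrilateral.hasLogBracket_EQuot_y_t (hQ : IsOrderedQuadrilateral o N x y z t)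
    (hBq : IsQnBracket K P (N + 1) 1 0 Bq) (ht : IsTriangleTuple x y z a α β γ)
    (ht' : IsTriangleTuple x y z a' α' β' γ') (hiq : i + q = N)
    (hb : toZn K P (N + 1) (Dmat K P (N + 1) (rows3s x z x i q (t 0)) v)
      ∈ nonZeroDivisors (ZnRing K P (N + 1))) :
    HasLogBracket Bq (EQuot K P (N + 1) a a' v ha')
      (EQuot K P (N + 1) (rows3s x z x i q (y 0)) (rows3s x z x i q (t 0)) v hb)
      (apexSign i α β - apexSign i α' β') := by
  obtain ⟨c, hct, hcy⟩ := hQ.exists_hasSwapExponent_t_y K ht hiq v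
  obtain ⟨c', hct', hcy'⟩ := hQ.exists_hasSwapExponent_t_y K ht' hiq v
  convert hasLogBracket_EQuot hBq ha' hb hcy hct hcy' hct' using 1
  ring

/-- The indicator of the triangle tuples of type `(i, 0, n - i)`, the only ones that contribute to
brackets with the `i`-th edge function of the edge `xz`. -/
def edgeIndicator (i α β : ℕ) : ℤ := if β = 0 ∧ α = i then 1 else 0

lemma apexSign_sub_one_sub_apexSign (hi : 0 < i) (α β : ℕ) :
    apexSign (i - 1) α β - apexSign i α β = 2 * edgeIndicator i α β := by
  unfold apexSign edgeIndicator
  split_ifs <;> omega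

lemma IsOrderedQuadrilateral.hasLogBracket_EQuot_edgeQuot
    (hQ : IsOrderedQuadrilateral o N x y z t) (hBq : IsQnBracket K P (N + 1) 1 0 Bq)
    (ht : IsTriangleTuple x y z a α β γ) (ht' : IsTriangleTuple x y z a' α' β' γ')
    (hi : 0 < i) (hiN : i ≤ N)
    (hB1 : toZn K P (N + 1) (Dmat K P (N + 1) (rows3s x z x i (N + 1 - i - 1) (y 0)) v)
      ∈ nonZeroDivisors (ZnRing K P (N + 1)))
    (hB2 : toZn K P (N + 1) (Dmat K P (N + 1) (rows3s x z x (i - 1) (N + 1 - i) (t 0)) v)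
      ∈ nonZeroDivisors (ZnRing K P (N + 1))) :
    HasLogBracket Bq (EQuot K P (N + 1) a a' v ha')
      (edgeQuot K P (N + 1) x z (t 0) (y 0) i v hB1 hB2)
      (2 * edgeIndicator i α β - 2 * edgeIndicator i α' β') := by
  rw [edgeQuot]
  convert (hQ.hasLogBracket_EQuot_t_y hBq ht ht' (by omega) hB1).mul_right hBq.2.2
    (hQ.hasLogBracket_EQuot_y_t hBq ht ht' (by omega) hB2) using 1
  rw [← apexSign_sub_one_sub_apexSign hi, ← apexSign_sub_one_sub_apexSign hi]
  ring

lemma IsOrderedQuadrilateral.hasLogBracket_thetaTri_edgeQuot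
    (hQ : IsOrderedQuadrilateral o N x y z t) (hBq : IsQnBracket K P (N + 1) 1 0 Bq)
    {m l p : ℕ} (hm : 0 < m) (hl : 0 < l) (hp : 0 < p) (hs : m + l + p = N + 1)
    (hi : 0 < i) (hiN : i ≤ N)
    (hA1 : toZn K P (N + 1) (Dmat K P (N + 1) (rows3s x y z (m + 1) (l - 1) (z (p - 1))) v)
      ∈ nonZeroDivisors (ZnRing K P (N + 1)))
    (hA2 : toZn K P (N + 1) (Dmat K P (N + 1) (rows3s x y z (m - 1) (l + 1) (x (m - 1))) v)
      ∈ nonZeroDivisors (ZnRing K P (N + 1)))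
    (hA3 : toZn K P (N + 1) (Dmat K P (N + 1) (rows3s x y z (m - 1) (l - 1) (y (l - 1))) v)
      ∈ nonZeroDivisors (ZnRing K P (N + 1)))
    (hB1 : toZn K P (N + 1) (Dmat K P (N + 1) (rows3s x z x i (N + 1 - i - 1) (y 0)) v)
      ∈ nonZeroDivisors (ZnRing K P (N + 1)))
    (hB2 : toZn K P (N + 1) (Dmat K P (N + 1) (rows3s x z x (i - 1) (N + 1 - i) (t 0)) v)
      ∈ nonZeroDivisors (ZnRing K P (N + 1))) :
    HasLogBracket Bq (thetaTri K P (N + 1) x y z m l p v hA1 hA2 hA3)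
      (edgeQuot K P (N + 1) x z (t 0) (y 0) i v hB1 hB2)
      (2 * (edgeIndicator i m (l - 1) - edgeIndicator i (m + 1) (l - 1))) := by
  have hE₁ := hQ.hasLogBracket_EQuot_edgeQuot (ha' := hA1) hBq
    (isTriangleTuple_rows3s_y x y z (α := m + 1) (γ := p - 1) hl
      (by omega) (by omega) (by omega) (by omega))
    (isTriangleTuple_rows3s_z x y z (α := m + 1) (β := l - 1) hp
      (by omega) (by omega) (by omega) (by omega)) hi hiN hB1 hB2
  have hE₂ := hQ.hasLogBracket_EQuot_edgeQuot (ha' := hA2) hBq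
    (isTriangleTuple_rows3s_z x y z (α := m - 1) (β := l + 1) hp
      (by omega) (by omega) (by omega) (by omega))
    (isTriangleTuple_rows3s_x x y z (β := l + 1) (γ := p - 1) hm
      (by omega) (by omega) (by omega) (by omega)) hi hiN hB1 hB2
  have hE₃ := hQ.hasLogBracket_EQuot_edgeQuot (ha' := hA3) hBq
    (isTriangleTuple_rows3s_x x y z (β := l - 1) (γ := p + 1) hm
      (by omega) (by omega) (by omega) (by omega))
    (isTriangleTuple_rows3s_y x y z (α := m - 1) (γ := p + 1) hl
      (by omega) (by omega) (by omega) (by omega)) hi hiN hB1 hB2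
  have hvanish {α β : ℕ} (hβ : 0 < β) : edgeIndicator i α β = 0 := if_neg fun h => hβ.ne' h.1
  rw [thetaTri]
  convert (hE₁.mul_left hBq.2.1 hE₂).mul_left hBq.2.1 hE₃ using 1
  rw [hvanish hl, hvanish hl, hvanish l.succ_pos, hvanish l.succ_pos]
  ring

end EdgeFunction

/-- In the quadrilateral configuration
`x_{n-1} ≺ … ≺ x_1 ≺ y_{n-1} ≺ … ≺ y_1 ≺ z_{n-1} ≺ … ≺ z_1 ≺ t_{n-1} ≺ … ≺ t_1` of
pairwise distinct points of `P` ordered anticlockwise, with `Θ(m,l,p)` the image of the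
`(m,l,p)`-triple ratio of the triangle `xyz` and `B_i` the image of the `(i,n-i)`-edge
function of the edge `xz`, the normalized extended swapping bracket `[Θ(m,l,p), B_i]`
equals `-1` if `(m,l,p) = (i-1, 1, n-i)`, equals `1` if `(m,l,p) = (i, 1, n-i-1)`, and
equals `0` in all other cases. -/
theorem bracket_triple_ratio_edge_function (K : Type) [Field K] [CharZero K]
    (P : Set Circle1) (n : ℕ) (hn : 2 ≤ n) (x y z t : ℕ → ↥P)
    (hcfg : AnticlockwiseList
      (descPts (fun i => ((x i : Circle1))) (n-1) ++ descPts (fun i => ((y i : Circle1))) (n-1)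
        ++ descPts (fun i => ((z i : Circle1))) (n-1)
        ++ descPts (fun i => ((t i : Circle1))) (n-1)))
    (m l p : ℕ) (hm : 0 < m) (hl : 0 < l) (hp : 0 < p) (hs : m + l + p = n)
    (i : ℕ) (hi1 : 1 ≤ i) (hi2 : i ≤ n-1) :
    ∀ Bq : QnRing K P n → QnRing K P n → QnRing K P n, IsQnBracket K P n 1 0 Bq →
    ∀ v : Fin n → ↥P, Function.Injective v →
    ∀ (hA1 : toZn K P n (Dmat K P n (rows3s x y z (m+1) (l-1) (z (p-1))) v)
          ∈ nonZeroDivisors (ZnRing K P n))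
      (hA2 : toZn K P n (Dmat K P n (rows3s x y z (m-1) (l+1) (x (m-1))) v)
          ∈ nonZeroDivisors (ZnRing K P n))
      (hA3 : toZn K P n (Dmat K P n (rows3s x y z (m-1) (l-1) (y (l-1))) v)
          ∈ nonZeroDivisors (ZnRing K P n))
      (hB1 : toZn K P n (Dmat K P n (rows3s x z x i (n-i-1) (y 0)) v)
          ∈ nonZeroDivisors (ZnRing K P n))
      (hB2 : toZn K P n (Dmat K P n (rows3s x z x (i-1) (n-i) (t 0)) v)
          ∈ nonZeroDivisors (ZnRing K P n)),
      ((m, l, p) = (i-1, 1, n-i) →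
        Bq (thetaTri K P n x y z m l p v hA1 hA2 hA3)
           (edgeQuot K P n x z (t 0) (y 0) i v hB1 hB2)
          = - (thetaTri K P n x y z m l p v hA1 hA2 hA3
              * edgeQuot K P n x z (t 0) (y 0) i v hB1 hB2)) ∧
      ((m, l, p) = (i, 1, n-i-1) →
        Bq (thetaTri K P n x y z m l p v hA1 hA2 hA3)
           (edgeQuot K P n x z (t 0) (y 0) i v hB1 hB2)
          = thetaTri K P n x y z m l p v hA1 hA2 hA3
            * edgeQuot K P n x z (t 0) (y 0) i v hB1 hB2) ∧
      ((m, l, p) ≠ (i-1, 1, n-i) ∧ (m, l, p) ≠ (i, 1, n-i-1) →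
        Bq (thetaTri K P n x y z m l p v hA1 hA2 hA3)
           (edgeQuot K P n x z (t 0) (y 0) i v hB1 hB2) = 0) := by
  obtain ⟨N, rfl⟩ : ∃ N, n = N + 1 := ⟨n - 1, by omega⟩
  intro Bq hBq v _ hA1 hA2 hA3 hB1 hB2
  obtain ⟨o, hQ⟩ : ∃ o, IsOrderedQuadrilateral o N x y z t :=
    exists_isOrderedQuadrilateral hcfg
  have hbr := (hQ.hasLogBracket_thetaTri_edgeQuot hBq hm hl hp hs hi1 hi2
    hA1 hA2 hA3 hB1 hB2).eq_mul (isUnit_two_QnRing K P)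
  simp only [ne_eq, Prod.mk.injEq]
  refine ⟨fun h => ?_, fun h => ?_, fun h => ?_⟩
  · have hc : edgeIndicator i m (l - 1) - edgeIndicator i (m + 1) (l - 1) = -1 := by
      unfold edgeIndicator; split_ifs <;> omega
    rw [hbr, hc, Int.cast_neg, Int.cast_one, neg_one_mul]
  · have hc : edgeIndicator i m (l - 1) - edgeIndicator i (m + 1) (l - 1) = 1 := by
      unfold edgeIndicator; split_ifs <;> omega
    rw [hbr, hc, Int.cast_one, one_mul]
  · have hc : edgeIndicator i m (l - 1) - edgeIndicator i (m + 1) (l - 1) = 0 := by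
      unfold edgeIndicator; split_ifs <;> omega
    rw [hbr, hc, Int.cast_zero, zero_mul]

end
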